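/- Let C > 0 and let g : ℝ → ℝ be continuously differentiable with g(0) = 0. Then for every t > 0, the function F(t) = ∫₀ᵗ C/√(t−u) · g(u) du is differentiable at t and F'(t) = ∫₀ᵗ C/√(t−u) · g'(u) du. -/

import Mathlib

/-! Because `g 0 = 0`, extending `g` by zero to the negative half-line keeps it Lipschitz, and the
substitution `v = x - u` writes `∫ u in 0..x, K (x - u) • g u` as the integral over a fixed interval
of `K v` times the extension at `x - v`. There `x` no longer appears in the singular factor, so one
differentiates under the integral sign, with the difference quotients dominated by a multiple of
`|K|`. The corner of the extension at `0` is met only for `v = x`, a null set. -/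

open MeasureTheory Set
open scoped Interval NNReal

section ZeroExtension

variable {E : Type*} [NormedAddCommGroup E] {f f' : ℝ → E} {a b : ℝ}

theorem indicator_Ici_eq_comp_max (ha : f a = 0) :
    (Ici a).indicator f = fun x => f (max x a) := by
  ext x
  rcases le_or_gt a x with hx | hx
  · rw [indicator_of_mem (mem_Ici.2 hx), max_eq_left hx]
  · rw [indicator_of_notMem (notMem_Ici.2 hx), max_eq_right hx.le, ha]

theorem lipschitzOnWith_indicator_Ici {M : ℝ≥0} (hf : LipschitzOnWith M f (Icc a b)) (hab : a ≤ b)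
    (ha : f a = 0) : LipschitzOnWith M ((Ici a).indicator f) (Iic b) := by
  have maps_to : MapsTo (fun x => max x a) (Iic b) (Icc a b) := fun x hx =>
    ⟨le_max_right x a, max_le hx hab⟩
  rw [indicator_Ici_eq_comp_max ha]
  simpa only [mul_one] using! hf.comp (LipschitzWith.id.max_const a).lipschitzOnWith maps_to

theorem hasDerivAt_indicator_Ici [NormedSpace ℝ E] {x : ℝ} (hx : x ≠ a)
    (hf : a < x → HasDerivAt f (f' x) x) :
    HasDerivAt ((Ici a).indicator f) ((Ici a).indicator f' x) x := by
  rcases hx.lt_or_gt with hxa | hax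
  · rw [indicator_of_notMem (notMem_Ici.2 hxa)]
    refine (hasDerivAt_const x 0).congr_of_eventuallyEq ?_
    filter_upwards [Iio_mem_nhds hxa] with y hy using indicator_of_notMem (notMem_Ici.2 hy) f
  · rw [indicator_of_mem (mem_Ici.2 hax.le)]
    refine (hf hax).congr_of_eventuallyEq ?_
    filter_upwards [Ici_mem_nhds hax] with y hy using indicator_of_mem hy f

theorem ae_hasDerivAt_indicator_Ici [NormedSpace ℝ E]
    (hf : ∀ᵐ x, x ∈ Ioo a b → HasDerivAt f (f' x) x) :
    ∀ᵐ x, x < b → HasDerivAt ((Ici a).indicator f) ((Ici a).indicator f' x) x := by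
  filter_upwards [hf, Measure.ae_ne volume a] with x hfx hxa hxb
  exact hasDerivAt_indicator_Ici hxa fun hax => hfx ⟨hax, hxb⟩

end ZeroExtension

section Convolution

variable {E : Type*} [NormedAddCommGroup E] [NormedSpace ℝ E] {K : ℝ → ℝ} {f f' : ℝ → E}
  {T b t : ℝ}

theorem integral_smul_indicator_Ici_sub (K : ℝ → ℝ) (f : ℝ → E) {x : ℝ} (hx : x ∈ Icc 0 T) :
    ∫ v in 0..T, K v • (Ici 0).indicator f (x - v) = ∫ u in 0..x, K (x - u) • f u := by
  have integrand_eq (v : ℝ) : K v • (Ici 0).indicator f (x - v) =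
      {v | v ≤ x}.indicator (fun v => K v • f (x - v)) v := by
    simp only [indicator_apply, mem_Ici, sub_nonneg, mem_ofPred_eq, smul_ite, smul_zero]
  calc ∫ v in 0..T, K v • (Ici 0).indicator f (x - v)
      = ∫ v in 0..x, K v • f (x - v) := by
        simp only [integrand_eq, intervalIntegral.integral_indicator hx]
    _ = ∫ u in 0..x, K (x - u) • f u := by
        simpa only [sub_sub_cancel, sub_self, sub_zero] using
          intervalIntegral.integral_comp_sub_left (a := 0) (b := x) (fun u => K (x - u) • f u) x

theorem intervalIntegrable_smul_comp_sub (hK : IntervalIntegrable K volume 0 T) (hT : 0 ≤ T)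
    (hf : ContinuousOn f (Iic b)) (htb : t ≤ b) :
    IntervalIntegrable (fun v => K v • f (t - v)) volume 0 T := by
  refine hK.smul_continuousOn (hf.comp (by fun_prop) fun v hv => ?_)
  rw [uIcc_of_le hT] at hv
  exact mem_Iic.2 (by linarith [hv.1])

theorem lipschitzOnWith_smul_comp_sub {M : ℝ≥0} (hf : LipschitzOnWith M f (Iic b)) (c : ℝ) {v : ℝ}
    (hv : 0 ≤ v) : LipschitzOnWith (‖c‖₊ * M) (fun x => c • f (x - v)) (Iic b) := by
  have shift : LipschitzOnWith 1 (fun x => x - v) (Iic b) :=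
    (LipschitzWith.of_dist_le_mul fun x y => by simp).lipschitzOnWith
  have maps_to : MapsTo (fun x => x - v) (Iic b) (Iic b) := fun x hx =>
    (sub_le_self x hv).trans hx
  simpa only [mul_one] using! (lipschitzWith_smul c).comp_lipschitzOnWith (hf.comp shift maps_to)

theorem ae_hasDerivAt_const_sub (hT : 0 ≤ T) (hf' : ∀ᵐ x, x < b → HasDerivAt f (f' x) x)
    (htb : t < b) : ∀ᵐ v, v ∈ Ι 0 T → HasDerivAt f (f' (t - v)) (t - v) := by
  have shifted : ∀ᵐ v, t - v < b → HasDerivAt f (f' (t - v)) (t - v) :=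
    (Measure.measurePreserving_sub_left volume t).quasiMeasurePreserving.ae hf'
  filter_upwards [shifted] with v hv hvT
  rw [uIoc_of_le hT] at hvT
  exact hv (by linarith [hvT.1])

theorem aestronglyMeasurable_comp_of_ae_hasDerivAt [CompleteSpace E] {α : Type*}
    [MeasurableSpace α] {μ : Measure α} {φ : α → ℝ} (hφ : AEMeasurable φ μ)
    (hf' : ∀ᵐ v ∂μ, HasDerivAt f (f' (φ v)) (φ v)) : AEStronglyMeasurable (fun v => f' (φ v)) μ :=
  ((stronglyMeasurable_deriv f).aestronglyMeasurable.comp_aemeasurable hφ).congr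
    (hf'.mono fun _ hv => hv.deriv)

theorem hasDerivAt_integral_smul_comp_sub [CompleteSpace E] {M : ℝ≥0}
    (hK : IntervalIntegrable K volume 0 T) (hT : 0 ≤ T) (hf : LipschitzOnWith M f (Iic b))
    (hf' : ∀ᵐ x, x < b → HasDerivAt f (f' x) x) (htb : t < b) :
    HasDerivAt (fun x => ∫ v in 0..T, K v • f (x - v)) (∫ v in 0..T, K v • f' (t - v)) t := by
  have integrable {x : ℝ} (hx : x ≤ b) : IntervalIntegrable (fun v => K v • f (x - v)) volume 0 T :=
    intervalIntegrable_smul_comp_sub hK hT hf.continuousOn hx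
  have lipschitz {v : ℝ} (hv : v ∈ Ι 0 T) :
      LipschitzOnWith (‖K v‖₊ * M) (fun x => K v • f (x - v)) (Iic b) := by
    rw [uIoc_of_le hT] at hv
    exact lipschitzOnWith_smul_comp_sub hf (K v) hv.1.le
  have ae_deriv : ∀ᵐ v, v ∈ Ι 0 T → HasDerivAt f (f' (t - v)) (t - v) :=
    ae_hasDerivAt_const_sub hT hf' htb
  have deriv_measurable :
      AEStronglyMeasurable (fun v => K v • f' (t - v)) (volume.restrict (Ι 0 T)) :=
    hK.def'.aestronglyMeasurable.smul <| aestronglyMeasurable_comp_of_ae_hasDerivAt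
      (by fun_prop) ((ae_restrict_iff' measurableSet_uIoc).2 ae_deriv)
  refine (intervalIntegral.hasDerivAt_integral_of_dominated_loc_of_lip
    (bound := fun v => ↑(‖K v‖₊ * M)) (Iic_mem_nhds htb) ?_ (integrable htb.le) deriv_measurable ?_
    (hK.norm.mul_const M) ?_).2
  · filter_upwards [Iic_mem_nhds htb] with x hx using (integrable hx).def'.aestronglyMeasurable
  · exact ae_of_all _ fun v hv => by simpa only [Real.nnabs_coe] using lipschitz hv
  · filter_upwards [ae_deriv] with v hv hvT
    exact ((hv hvT).comp_sub_const t v).const_smul (K v)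

end Convolution

theorem intervalIntegrable_const_div_sqrt (C : ℝ) {T : ℝ} (hT : 0 ≤ T) :
    IntervalIntegrable (fun v => C / √v) volume 0 T := by
  have rpow_integrable : IntervalIntegrable (fun v : ℝ => C * v ^ (-(1 / 2) : ℝ)) volume 0 T :=
    (intervalIntegral.intervalIntegrable_rpow' (by norm_num)).const_mul C
  refine rpow_integrable.congr fun v hv => ?_
  rw [uIoc_of_le hT] at hv
  simp only [Real.sqrt_eq_rpow, Real.rpow_neg hv.1.le, div_eq_mul_inv]

theorem exists_lipschitzOnWith_Icc_of_hasDerivAt {E : Type*} [NormedAddCommGroup E]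
    [NormedSpace ℝ E] {f f' : ℝ → E} (a b : ℝ) (hf : ∀ x, HasDerivAt f (f' x) x)
    (hf' : Continuous f') : ∃ M, LipschitzOnWith M f (Icc a b) := by
  have contDiff : ContDiff ℝ 1 f := by
    rw [contDiff_one_iff_deriv, (funext fun x => (hf x).deriv : deriv f = f')]
    exact ⟨fun x => (hf x).differentiableAt, hf'⟩
  exact contDiff.contDiffOn.exists_lipschitzOnWith one_ne_zero (convex_Icc a b) isCompact_Icc

theorem stmt3_general {E : Type*} [NormedAddCommGroup E] [NormedSpace ℝ E] [CompleteSpace E]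
    {K : ℝ → ℝ} {g g' : ℝ → E} {T t : ℝ} {M : ℝ≥0} (hK : IntervalIntegrable K volume 0 T)
    (hg : LipschitzOnWith M g (Icc 0 T)) (hg' : ∀ᵐ u, u ∈ Ioo 0 T → HasDerivAt g (g' u) u)
    (hg0 : g 0 = 0) (ht : t ∈ Ioo 0 T) :
    HasDerivAt (fun x => ∫ u in 0..x, K (x - u) • g u) (∫ u in 0..t, K (t - u) • g' u) t := by
  have hT : 0 ≤ T := (ht.1.trans ht.2).le
  have deriv_fixed_interval := hasDerivAt_integral_smul_comp_sub hK hT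
    (lipschitzOnWith_indicator_Ici hg hT hg0) (ae_hasDerivAt_indicator_Ici hg') ht.2
  rw [integral_smul_indicator_Ici_sub K g' (Ioo_subset_Icc_self ht)] at deriv_fixed_interval
  refine deriv_fixed_interval.congr_of_eventuallyEq ?_
  filter_upwards [Icc_mem_nhds ht.1 ht.2] with x hx
  exact (integral_smul_indicator_Ici_sub K g hx).symm

/-- Since `g(0) = 0`, the time derivative of the convolution of the weakly singular
kernel `K(t) = C/√t` with `g` equals the convolution of `K` with `g'`. -/
theorem stmt3 (C : ℝ) (hC : 0 < C) (g g' : ℝ → ℝ)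
    (hg : ∀ u, HasDerivAt g (g' u) u) (hg' : Continuous g')
    (hg0 : g 0 = 0) :
    ∀ t > (0:ℝ), HasDerivAt (fun t' => ∫ u in (0:ℝ)..t', C / Real.sqrt (t' - u) * g u)
      (∫ u in (0:ℝ)..t, C / Real.sqrt (t - u) * g' u) t := by
  intro t ht
  obtain ⟨M, hM⟩ := exists_lipschitzOnWith_Icc_of_hasDerivAt 0 (t + 1) hg hg'
  exact stmt3_general (intervalIntegrable_const_div_sqrt C (by linarith)) hM
    (ae_of_all _ fun u _ => hg u) hg0 ⟨ht, lt_add_one t⟩
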